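/- Fix a pmf p on 𝒳ⁿ with p(xⁿ) > 0 for all xⁿ, λ ≥ 0 and a distortion function d: 𝒳ⁿ×𝒳̂ⁿ→[0,∞). In the Blahut–Arimoto-type iteration (from a strictly positive q^{k−1}, set r^k(x̂ⁿ|xⁿ) = q^{k−1}(x̂ⁿ||x^{n−1})2^{−λd(xⁿ,x̂ⁿ)} / Σ_{x̂ⁿ} q^{k−1}(x̂ⁿ||x^{n−1})2^{−λd(xⁿ,x̂ⁿ)}, with q^k induced by p·r^k), let c^k_{x̂ⁿ,x^{n−1}} = q^k(x̂ⁿ||x^{n−1}) / q^{k−1}(x̂ⁿ||x^{n−1}), D_k = Σ_{xⁿ,x̂ⁿ} p(xⁿ)r^k(x̂ⁿ|xⁿ)d(xⁿ,x̂ⁿ), and R^k_n(D_k) = (1/n)·Σ_{xⁿ,x̂ⁿ} p(xⁿ)r^k(x̂ⁿ|xⁿ) log₂( r^k(x̂ⁿ|xⁿ)/q^k(x̂ⁿ||x^{n−1}) ). If F := log₂ max_{x̂ⁿ,x^{n−1}} c^k_{x̂ⁿ,x^{n−1}} − Σ_{xⁿ,x̂ⁿ} p(xⁿ)r^k(x̂ⁿ|xⁿ)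 log₂ c^k_{x̂ⁿ,x^{n−1}} ≤ ε, then 0 ≤ R^k_n(D_k) − Rₙ(D_k) ≤ ε. -/

import Mathlib

open scoped BigOperators
open Filter

noncomputable section

namespace FFRD

variable {X Y : Type} [Fintype X] [DecidableEq X] [Fintype Y] [DecidableEq Y] {n : ℕ}

/-- `p` is a probability mass function on a finite type. -/
def IsPMF {α : Type} [Fintype α] (p : α → ℝ) : Prop :=
  (∀ a, 0 ≤ p a) ∧ ∑ a, p a = 1

/-- `r` is a conditional pmf on `Fin n → Y` given `Fin n → X`. -/
def IsCondPMF (r : (Fin n → X) → (Fin n → Y) → ℝ) : Prop :=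
  (∀ x y, 0 ≤ r x y) ∧ ∀ x, ∑ y, r x y = 1

/-- The causal conditioning pmf `q_r(ŷⁿ‖x^{n-1})` induced by the joint pmf `p(x)·r(y|x)`:
the product over `i` of the conditional probabilities `P(y_i | y^{i-1}, x^{i-1})`. -/
def causalCond (p : (Fin n → X) → ℝ) (r : (Fin n → X) → (Fin n → Y) → ℝ)
    (x : Fin n → X) (y : Fin n → Y) : ℝ :=
  ∏ i : Fin n,
    ((∑ x' : Fin n → X, ∑ y' : Fin n → Y,
        if (∀ j, j < i → x' j = x j) ∧ (∀ j, j ≤ i → y' j = y j)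
        then p x' * r x' y' else 0) /
      (∑ x' : Fin n → X, ∑ y' : Fin n → Y,
        if (∀ j, j < i → x' j = x j) ∧ (∀ j, j < i → y' j = y j)
        then p x' * r x' y' else 0))

/-- Directed information `I(X̂ⁿ → Xⁿ)` computed from source pmf `p` and conditional pmf `r`. -/
def directedInfo (p : (Fin n → X) → ℝ) (r : (Fin n → X) → (Fin n → Y) → ℝ) : ℝ :=
  ∑ x, ∑ y, p x * r x y * Real.logb 2 (r x y / causalCond p r x y)

/-- The `n`-th order rate distortion function with feed-forward. -/
def Rn (n : ℕ) (p : (Fin n → X) → ℝ) (d : (Fin n → X) → (Fin n → Y) → ℝ) (D : ℝ) : ℝ :=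
  (1 / (n : ℝ)) *
    sInf {v | ∃ r : (Fin n → X) → (Fin n → Y) → ℝ, IsCondPMF r ∧
      (∑ x, ∑ y, p x * r x y * d x y) ≤ D ∧ v = directedInfo p r}

/-- Left shift on sequences. -/
def shift (X : Type) : (ℕ → X) → (ℕ → X) := fun ω k => ω (k + 1)

/-- The law of the first `n` coordinates under `μ`. -/
def lawFin [MeasurableSpace X] (μ : MeasureTheory.Measure (ℕ → X)) (n : ℕ)
    (x : Fin n → X) : ℝ :=
  (μ {ω | ∀ i : Fin n, ω (i : ℕ) = x i}).toReal

/-- Per-letter distortion extended to blocks of length `L`. -/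
def dBlock (d0 : X → Y → ℝ) (L : ℕ) (x : Fin L → X) (y : Fin L → Y) : ℝ :=
  (1 / (L : ℝ)) * ∑ i, d0 (x i) (y i)

end FFRD

namespace FFRD

/-- `q` is a causal conditioning pmf `q(x̂ⁿ‖x^{n−1}) = ∏ᵢ qᵢ(x̂ᵢ | x̂^{i−1}, x^{i−1})`,
where each factor is a pmf on `Y` depending only on the strict pasts of `x` and `y`. -/
def IsCausalCondKernel {X Y : Type} [Fintype X] [Fintype Y] {n : ℕ}
    (q : (Fin n → X) → (Fin n → Y) → ℝ) : Prop :=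
  ∃ qi : Fin n → (Fin n → X) → (Fin n → Y) → Y → ℝ,
    (∀ i x y, (∀ b, 0 ≤ qi i x y b) ∧ ∑ b, qi i x y b = 1) ∧
    (∀ i x x' y y', (∀ j, j < i → x j = x' j) → (∀ j, j < i → y j = y' j) →
      qi i x y = qi i x' y') ∧
    (∀ x y, q x y = ∏ i, qi i x y (y i))

/-- `I_FF(r, q) = Σ_{xⁿ,x̂ⁿ} p(xⁿ) r(x̂ⁿ|xⁿ) log₂ ( r(x̂ⁿ|xⁿ) / q(x̂ⁿ‖x^{n−1}) )`. -/
def IFF {X Y : Type} [Fintype X] [Fintype Y] {n : ℕ} (p : (Fin n → X) → ℝ)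
    (r q : (Fin n → X) → (Fin n → Y) → ℝ) : ℝ :=
  ∑ x, ∑ y, p x * r x y * Real.logb 2 (r x y / q x y)

end FFRD

/-!
Write `q_r` for the causal conditioning pmf induced by `p` and `r`. The directed information is
convex in `r`, with gradient `log (s / q_s)` at `s` up to terms constant in `r`; as it equals
`∑ p s log (s / q_s)` at `s`, every conditional pmf `r` satisfies the tangent inequality
`∑ p r log (s / q_s) ≤ I(r)`. This is Gibbs' inequality for the weights `p r` and
`p s q_r / q_s`, the latter having total mass at most `1`: replacing the factors
`P(y_i | y^{i-1}, x^{i-1})` of the joint pmf `p s` by other conditional pmfs, last index first,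
never increases the mass.

For the Blahut–Arimoto update `s ∝ q 2^(-λ d)`, with normalisation `Z` and `c = q_s / q`, the
gradient is `-λ d - log Z - log c`. If `r` has no larger distortion than `s`, the mean of `-λ d`
under `r` is at least that under `s`; the mean of `log Z` is the same; and `log c ≤ log max c`.
Hence `I(r) ≥ I(s) - (log max c - ∑ p s log c)`.
-/

namespace FFRD

section Gibbs

theorem sub_le_mul_log_div {a w : ℝ} (ha : 0 ≤ a) (hw : 0 ≤ w) (haw : w = 0 → a = 0) :
    a - w ≤ a * Real.log (a / w) := by
  rcases hw.eq_or_lt' with rfl | hwpos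
  · simp [haw rfl]
  · calc a - w = w * (a / w - 1) := by field_simp
      _ ≤ w * (a / w * Real.log (a / w)) :=
        mul_le_mul_of_nonneg_left (Real.self_sub_one_le_mul_log (div_nonneg ha hw)) hw
      _ = a * Real.log (a / w) := by field_simp

theorem sum_mul_logb_div_nonneg {ι : Type*} (s : Finset ι) {a w : ι → ℝ} {b : ℝ} (hb : 1 < b)
    (ha : ∀ i ∈ s, 0 ≤ a i) (hw : ∀ i ∈ s, 0 ≤ w i) (haw : ∀ i ∈ s, w i = 0 → a i = 0)
    (hsum : ∑ i ∈ s, w i ≤ ∑ i ∈ s, a i) :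
    0 ≤ ∑ i ∈ s, a i * Real.logb b (a i / w i) := by
  simp_rw [Real.logb, ← mul_div_assoc, ← Finset.sum_div]
  refine div_nonneg ?_ (Real.log_pos hb).le
  calc 0 ≤ ∑ i ∈ s, (a i - w i) := by rw [Finset.sum_sub_distrib]; exact sub_nonneg.2 hsum
    _ ≤ ∑ i ∈ s, a i * Real.log (a i / w i) :=
      Finset.sum_le_sum fun i hi => sub_le_mul_log_div (ha i hi) (hw i hi) (haw i hi)

end Gibbs

section Conditioning

variable {Z A B : Type*} [Fintype Z] [DecidableEq A] [DecidableEq B]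

/-- The marginal of the weight function `P` under `f`, that is, its pushforward along `f`. -/
def marginal (P : Z → ℝ) (f : Z → A) (a : A) : ℝ :=
  ∑ z with f z = a, P z

/-- The conditional probability, under the weights `P`, that `g = b` given `f = a`. It is `0`
when `f = a` has weight zero. -/
def condProb (P : Z → ℝ) (f : Z → A) (g : Z → B) (a : A) (b : B) : ℝ :=
  marginal P (fun z => (f z, g z)) (a, b) / marginal P f a

variable {P : Z → ℝ} (f : Z → A) (g : Z → B)

theorem marginal_nonneg (hP : ∀ z, 0 ≤ P z) (a : A) : 0 ≤ marginal P f a :=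
  Finset.sum_nonneg fun z _ => hP z

theorem le_marginal (hP : ∀ z, 0 ≤ P z) (z : Z) : P z ≤ marginal P f (f z) :=
  Finset.single_le_sum (fun w _ => hP w) (by simp)

theorem sum_mul_comp_eq_sum_marginal_mul [Fintype A] (φ : A → ℝ) :
    ∑ z, P z * φ (f z) = ∑ a, marginal P f a * φ a := by
  rw [← Finset.sum_fiberwise Finset.univ f]
  refine Finset.sum_congr rfl fun a _ => ?_
  rw [marginal, Finset.sum_mul]
  exact Finset.sum_congr rfl fun z hz => by rw [(Finset.mem_filter.1 hz).2]

theorem sum_marginal_prodMk [Fintype B] (a : A) :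
    ∑ b, marginal P (fun z => (f z, g z)) (a, b) = marginal P f a := by
  simp_rw [marginal, Prod.mk.injEq, ← Finset.filter_filter]
  exact Finset.sum_fiberwise _ g P

theorem condProb_nonneg (hP : ∀ z, 0 ≤ P z) (a : A) (b : B) : 0 ≤ condProb P f g a b :=
  div_nonneg (marginal_nonneg _ hP _) (marginal_nonneg _ hP _)

theorem condProb_pos (hP : ∀ z, 0 ≤ P z) {z : Z} (hz : 0 < P z) :
    0 < condProb P f g (f z) (g z) :=
  div_pos (hz.trans_le (le_marginal (fun z => (f z, g z)) hP z)) (hz.trans_le (le_marginal f hP z))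

theorem sum_condProb_le_one [Fintype B] (a : A) : ∑ b, condProb P f g a b ≤ 1 := by
  simp_rw [condProb, ← Finset.sum_div, sum_marginal_prodMk]
  exact div_self_le_one _

theorem sum_mul_div_condProb_le [Finite A] [Fintype B] (hP : ∀ z, 0 ≤ P z) {h : A → ℝ}
    (hh : ∀ z, 0 ≤ h (f z)) {κ : A → B → ℝ} (hκ : ∀ a b, 0 ≤ κ a b) (hκ_sum : ∀ a, ∑ b, κ a b ≤ 1) :
    ∑ z, P z * (h (f z) * (κ (f z) (g z) / condProb P f g (f z) (g z))) ≤ ∑ z, P z * h (f z) := by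
  have := Fintype.ofFinite A
  have hmass (a : A) : 0 ≤ marginal P f a * h a := by
    rw [marginal, Finset.sum_mul]
    refine Finset.sum_nonneg fun z hz => ?_
    rw [← (Finset.mem_filter.1 hz).2]
    exact mul_nonneg (hP z) (hh z)
  calc ∑ z, P z * (h (f z) * (κ (f z) (g z) / condProb P f g (f z) (g z)))
      = ∑ a, ∑ b, marginal P (fun z => (f z, g z)) (a, b) *
          (h a * (κ a b / condProb P f g a b)) := by
        rw [sum_mul_comp_eq_sum_marginal_mul (fun z => (f z, g z))
          (fun ab => h ab.1 * (κ ab.1 ab.2 / condProb P f g ab.1 ab.2)), Fintype.sum_prod_type]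
    _ = ∑ a, ∑ b, marginal P f a * h a * κ a b *
          (marginal P (fun z => (f z, g z)) (a, b) / marginal P (fun z => (f z, g z)) (a, b)) := by
        refine Finset.sum_congr rfl fun a _ => Finset.sum_congr rfl fun b _ => ?_
        rw [condProb, div_div_eq_mul_div]
        ring
    _ ≤ ∑ a, ∑ b, marginal P f a * h a * κ a b :=
        Finset.sum_le_sum fun a _ => Finset.sum_le_sum fun b _ =>
          mul_le_of_le_one_right (mul_nonneg (hmass a) (hκ a b)) (div_self_le_one _)
    _ ≤ ∑ a, marginal P f a * h a := by
        simp_rw [← Finset.mul_sum]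
        exact Finset.sum_le_sum fun a _ => mul_le_of_le_one_right (hmass a) (hκ_sum a)
    _ = ∑ z, P z * h (f z) := (sum_mul_comp_eq_sum_marginal_mul f h).symm

theorem sum_mul_prod_div_condProb_le {ι : Type*} [LinearOrder ι] {A B : ι → Type*}
    [∀ i, Finite (A i)] [∀ i, DecidableEq (A i)] [∀ i, Fintype (B i)] [∀ i, DecidableEq (B i)]
    {f : ∀ i, Z → A i} {g : ∀ i, Z → B i}
    (hfg : ∀ i k, i < k → Function.FactorsThrough (fun z => (f i z, g i z)) (f k))
    (hP : ∀ z, 0 ≤ P z) {κ : ∀ i, A i → B i → ℝ} (hκ : ∀ i a b, 0 ≤ κ i a b)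
    (hκ_sum : ∀ i a, ∑ b, κ i a b ≤ 1) (s : Finset ι) :
    ∑ z, P z * ∏ i ∈ s, κ i (f i z) (g i z) / condProb P (f i) (g i) (f i z) (g i z)
      ≤ ∑ z, P z := by
  induction s using Finset.induction_on_max with
  | empty => simp
  | insert k s hk ih =>
    let ratio (i : ι) (z : Z) : ℝ :=
      κ i (f i z) (g i z) / condProb P (f i) (g i) (f i z) (g i z)
    have hpast : Function.FactorsThrough (fun z => ∏ i ∈ s, ratio i z) (f k) := by
      refine fun z z' hz => Finset.prod_congr rfl fun i hi => ?_
      obtain ⟨hf, hg⟩ := Prod.mk.inj (hfg i k (hk i hi) hz)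
      simp only [ratio, hf, hg]
    obtain ⟨h, hh⟩ := (Function.factorsThrough_iff _).1 hpast
    have hh_apply (z : Z) : ∏ i ∈ s, ratio i z = h (f k z) := congrFun hh z
    have hh_nonneg (z : Z) : 0 ≤ h (f k z) := by
      rw [← hh_apply]
      exact Finset.prod_nonneg fun i _ => div_nonneg (hκ i _ _) (condProb_nonneg _ _ hP _ _)
    have hks : k ∉ s := fun hmem => (hk k hmem).false
    calc ∑ z, P z * ∏ i ∈ insert k s, ratio i z
        = ∑ z, P z * (h (f k z) * ratio k z) := by
          simp_rw [Finset.prod_insert hks, hh_apply, mul_comm]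
      _ ≤ ∑ z, P z * h (f k z) := sum_mul_div_condProb_le _ _ hP hh_nonneg (hκ k) (hκ_sum k)
      _ = ∑ z, P z * ∏ i ∈ s, ratio i z := by simp_rw [hh_apply]
      _ ≤ ∑ z, P z := ih

end Conditioning

section JointExpectation

variable {α β : Type*}

/-- The joint weights of a source pmf `p` followed by a conditional pmf `r`. -/
def joint (p : α → ℝ) (r : α → β → ℝ) (z : α × β) : ℝ :=
  p z.1 * r z.1 z.2

/-- The expectation of `f` under the joint weights of `p` and `r`. It is an iterated sum, as are
the distortion and information quantities of the theorem. -/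
def jointExp [Fintype α] [Fintype β] (p : α → ℝ) (r f : α → β → ℝ) : ℝ :=
  ∑ x, ∑ y, p x * r x y * f x y

theorem joint_nonneg {p : α → ℝ} {r : α → β → ℝ} (hp : ∀ x, 0 ≤ p x) (hr : ∀ x y, 0 ≤ r x y)
    (z : α × β) : 0 ≤ joint p r z :=
  mul_nonneg (hp z.1) (hr z.1 z.2)

theorem jointExp_congr_of_pos [Fintype α] [Fintype β] {p : α → ℝ} {r f g : α → β → ℝ}
    (hp : ∀ x, 0 ≤ p x) (h : ∀ x y, 0 < p x → f x y = g x y) :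
    jointExp p r f = jointExp p r g := by
  refine Finset.sum_congr rfl fun x _ => Finset.sum_congr rfl fun y _ => ?_
  rcases (hp x).eq_or_lt' with hx | hx
  · simp [hx]
  · rw [h x y hx]

variable {X Y : Type} [Fintype X] [Fintype Y] {n : ℕ} {p : (Fin n → X) → ℝ}
  {r : (Fin n → X) → (Fin n → Y) → ℝ}

theorem jointExp_fst (hr : IsCondPMF r) (φ : (Fin n → X) → ℝ) :
    jointExp p r (fun x _ => φ x) = ∑ x, p x * φ x := by
  simp_rw [jointExp, ← Finset.sum_mul, ← Finset.mul_sum, hr.2, mul_one]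

theorem sum_joint_eq_one (hp : IsPMF p) (hr : IsCondPMF r) : ∑ z, joint p r z = 1 := by
  simp_rw [Fintype.sum_prod_type, joint, ← Finset.mul_sum, hr.2, mul_one, hp.2]

theorem jointExp_le_of_le (hp : IsPMF p) (hr : IsCondPMF r) {f : (Fin n → X) → (Fin n → Y) → ℝ}
    {C : ℝ} (hf : ∀ x y, 0 < p x → f x y ≤ C) : jointExp p r f ≤ C := by
  calc jointExp p r f ≤ ∑ x, ∑ y, p x * r x y * C := by
        refine Finset.sum_le_sum fun x _ => Finset.sum_le_sum fun y _ => ?_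
        rcases (hp.1 x).eq_or_lt' with hx | hx
        · simp [hx]
        · exact mul_le_mul_of_nonneg_left (hf x y hx) (mul_nonneg hx.le (hr.1 x y))
    _ = ∑ x, p x * C := jointExp_fst hr fun _ => C
    _ = C := by rw [← Finset.sum_mul, hp.2, one_mul]

end JointExpectation

section CausalConditioning

variable {X Y : Type} {n : ℕ}

/-- The strict past `(x^{i-1}, y^{i-1})` of the index `i` in a pair of sequences. -/
def past (i : Fin n) (z : (Fin n → X) × (Fin n → Y)) : ({j // j < i} → X) × ({j // j < i} → Y) :=
  (fun j => z.1 j, fun j => z.2 j)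

theorem past_eq_past_iff {i : Fin n} {z z' : (Fin n → X) × (Fin n → Y)} :
    past i z = past i z' ↔ (∀ j < i, z.1 j = z'.1 j) ∧ ∀ j < i, z.2 j = z'.2 j := by
  simp only [past, Prod.mk.injEq, funext_iff, Subtype.forall]

theorem past_eq_past_and_eq_iff {i : Fin n} {z z' : (Fin n → X) × (Fin n → Y)} :
    past i z = past i z' ∧ z.2 i = z'.2 i ↔
      (∀ j < i, z.1 j = z'.1 j) ∧ ∀ j ≤ i, z.2 j = z'.2 j := by
  simp only [past_eq_past_iff, le_iff_lt_or_eq, or_imp, forall_and, forall_eq, and_assoc]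

theorem factorsThrough_past {i k : Fin n} (hik : i < k) :
    Function.FactorsThrough (fun z : (Fin n → X) × (Fin n → Y) => (past i z, z.2 i)) (past k) := by
  intro z z' h
  obtain ⟨hx, hy⟩ := past_eq_past_iff.1 h
  exact Prod.ext_iff.2 <| past_eq_past_and_eq_iff.2
    ⟨fun j hj => hx j (hj.trans hik), fun j hj => hy j (hj.trans_lt hik)⟩

variable [Fintype X] [DecidableEq X] [Fintype Y] [DecidableEq Y] {p : (Fin n → X) → ℝ}
  {r s : (Fin n → X) → (Fin n → Y) → ℝ}

theorem causalCond_eq_prod_condProb (x : Fin n → X) (y : Fin n → Y) :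
    causalCond p r x y =
      ∏ i, condProb (joint p r) (past i) (fun z => z.2 i) (past i (x, y)) (y i) := by
  simp_rw [causalCond, condProb, marginal, Finset.sum_filter, Fintype.sum_prod_type, Prod.mk.injEq,
    past_eq_past_and_eq_iff (z' := (x, y)), past_eq_past_iff, joint]

theorem causalCond_nonneg (hp : ∀ x, 0 ≤ p x) (hr : ∀ x y, 0 ≤ r x y)
    (x : Fin n → X) (y : Fin n → Y) : 0 ≤ causalCond p r x y := by
  rw [causalCond_eq_prod_condProb]
  exact Finset.prod_nonneg fun i _ => condProb_nonneg _ _ (joint_nonneg hp hr) _ _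

theorem causalCond_pos (hp : ∀ x, 0 ≤ p x) (hr : ∀ x y, 0 ≤ r x y) {x : Fin n → X}
    {y : Fin n → Y} (hx : 0 < p x) (hxy : 0 < r x y) : 0 < causalCond p r x y := by
  rw [causalCond_eq_prod_condProb]
  exact Finset.prod_pos fun i _ => condProb_pos (past i) (fun z => z.2 i) (joint_nonneg hp hr)
    (z := (x, y)) (mul_pos hx hxy)

/-- The joint weights of `p` and `s` after its causal factors `P(y_i | y^{i-1}, x^{i-1})` have been
replaced by those of the joint weights of `p` and `r`. -/
def replaceCausalCond (p : (Fin n → X) → ℝ) (s r : (Fin n → X) → (Fin n → Y) → ℝ)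
    (z : (Fin n → X) × (Fin n → Y)) : ℝ :=
  joint p s z * (causalCond p r z.1 z.2 / causalCond p s z.1 z.2)

theorem replaceCausalCond_nonneg (hp : ∀ x, 0 ≤ p x) (hs : ∀ x y, 0 ≤ s x y)
    (hr : ∀ x y, 0 ≤ r x y) (z : (Fin n → X) × (Fin n → Y)) : 0 ≤ replaceCausalCond p s r z :=
  mul_nonneg (joint_nonneg hp hs z)
    (div_nonneg (causalCond_nonneg hp hr _ _) (causalCond_nonneg hp hs _ _))

theorem sum_replaceCausalCond_le (hp : ∀ x, 0 ≤ p x) (hs : ∀ x y, 0 ≤ s x y)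
    (hr : ∀ x y, 0 ≤ r x y) : ∑ z, replaceCausalCond p s r z ≤ ∑ z, joint p s z := by
  simp_rw [replaceCausalCond, causalCond_eq_prod_condProb, ← Finset.prod_div_distrib]
  exact sum_mul_prod_div_condProb_le (fun _ _ => factorsThrough_past) (joint_nonneg hp hs)
    (fun i => condProb_nonneg (past i) (fun z => z.2 i) (joint_nonneg hp hr))
    (fun i => sum_condProb_le_one (past i) fun z => z.2 i) Finset.univ

theorem joint_div_replaceCausalCond {x : Fin n → X} {y : Fin n → Y} (hx : p x ≠ 0) :
    joint p r (x, y) / replaceCausalCond p s r (x, y) =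
      r x y / causalCond p r x y / (s x y / causalCond p s x y) := by
  simp only [joint, replaceCausalCond]
  field_simp

theorem joint_eq_zero_of_replaceCausalCond_eq_zero (hp : ∀ x, 0 ≤ p x) (hs : ∀ x y, 0 ≤ s x y)
    (hr : ∀ x y, 0 ≤ r x y) (hsr : ∀ x y, s x y = 0 → r x y = 0)
    {z : (Fin n → X) × (Fin n → Y)} (hz : replaceCausalCond p s r z = 0) : joint p r z = 0 := by
  by_contra hjoint
  have hpz := (hp z.1).lt_of_ne' (left_ne_zero_of_mul hjoint)
  have hrz := (hr z.1 z.2).lt_of_ne' (right_ne_zero_of_mul hjoint)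
  have hsz := (hs z.1 z.2).lt_of_ne' (mt (hsr _ _) hrz.ne')
  exact (mul_pos (mul_pos hpz hsz)
    (div_pos (causalCond_pos hp hr hpz hrz) (causalCond_pos hp hs hpz hsz))).ne' hz

theorem joint_mul_logb_div_replaceCausalCond (hp : ∀ x, 0 ≤ p x) (hs : ∀ x y, 0 ≤ s x y)
    (hr : ∀ x y, 0 ≤ r x y) (hsr : ∀ x y, s x y = 0 → r x y = 0)
    (x : Fin n → X) (y : Fin n → Y) :
    joint p r (x, y) * Real.logb 2 (joint p r (x, y) / replaceCausalCond p s r (x, y)) =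
      p x * r x y * Real.logb 2 (r x y / causalCond p r x y) -
        p x * r x y * Real.logb 2 (s x y / causalCond p s x y) := by
  rcases (hp x).eq_or_lt' with hpx | hpx
  · simp [joint, hpx]
  rcases (hr x y).eq_or_lt' with hrxy | hrxy
  · simp [joint, hrxy]
  have hsxy := (hs x y).lt_of_ne' (mt (hsr x y) hrxy.ne')
  rw [joint_div_replaceCausalCond hpx.ne',
    Real.logb_div (div_pos hrxy (causalCond_pos hp hr hpx hrxy)).ne'
      (div_pos hsxy (causalCond_pos hp hs hpx hsxy)).ne', mul_sub, joint]

theorem jointExp_logb_div_causalCond_le_directedInfo (hp : IsPMF p) (hs : IsCondPMF s)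
    (hr : IsCondPMF r) (hsr : ∀ x y, s x y = 0 → r x y = 0) :
    jointExp p r (fun x y => Real.logb 2 (s x y / causalCond p s x y)) ≤ directedInfo p r := by
  have hmass : ∑ z, replaceCausalCond p s r z ≤ ∑ z, joint p r z := by
    rw [sum_joint_eq_one hp hr, ← sum_joint_eq_one hp hs]
    exact sum_replaceCausalCond_le hp.1 hs.1 hr.1
  have hgibbs := sum_mul_logb_div_nonneg Finset.univ one_lt_two
    (fun z _ => joint_nonneg hp.1 hr.1 z) (fun z _ => replaceCausalCond_nonneg hp.1 hs.1 hr.1 z)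
    (fun z _ => joint_eq_zero_of_replaceCausalCond_eq_zero hp.1 hs.1 hr.1 hsr) hmass
  simp_rw [Fintype.sum_prod_type, joint_mul_logb_div_replaceCausalCond hp.1 hs.1 hr.1 hsr,
    Finset.sum_sub_distrib] at hgibbs
  exact sub_nonneg.1 hgibbs

end CausalConditioning

section BlahutArimoto

variable {X Y : Type} [Fintype Y] {n : ℕ} {lam : ℝ} {d q : (Fin n → X) → (Fin n → Y) → ℝ}

/-- The normalisation `∑_y q(y‖x) 2^(-λ d(x,y))` of the Blahut–Arimoto update. -/
def partitionFun (lam : ℝ) (d q : (Fin n → X) → (Fin n → Y) → ℝ) (x : Fin n → X) : ℝ :=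
  ∑ y, q x y * 2 ^ (-(lam * d x y))

/-- The conditional pmf `r^k` that the Blahut–Arimoto iteration computes from `q = q^{k-1}`. -/
def blahutArimoto (lam : ℝ) (d q : (Fin n → X) → (Fin n → Y) → ℝ) (x : Fin n → X)
    (y : Fin n → Y) : ℝ :=
  q x y * 2 ^ (-(lam * d x y)) / partitionFun lam d q x

theorem partitionFun_pos [Nonempty Y] (hq : ∀ x y, 0 < q x y) (x : Fin n → X) :
    0 < partitionFun lam d q x :=
  Finset.sum_pos (fun y _ => mul_pos (hq x y) (by positivity)) Finset.univ_nonempty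

theorem blahutArimoto_pos [Nonempty Y] (hq : ∀ x y, 0 < q x y) (x : Fin n → X) (y : Fin n → Y) :
    0 < blahutArimoto lam d q x y :=
  div_pos (mul_pos (hq x y) (by positivity)) (partitionFun_pos hq x)

theorem isCondPMF_blahutArimoto [Nonempty Y] (hq : ∀ x y, 0 < q x y) :
    IsCondPMF (blahutArimoto lam d q) := by
  refine ⟨fun x y => (blahutArimoto_pos hq x y).le, fun x => ?_⟩
  simp_rw [blahutArimoto, ← Finset.sum_div]
  exact div_self (partitionFun_pos hq x).ne'

variable [Fintype X] [DecidableEq X] [DecidableEq Y] {p : (Fin n → X) → ℝ}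

/-- The ratio `c^k = q^k / q^{k-1}` of two successive causal conditioning pmfs of the
Blahut–Arimoto iteration, where `q = q^{k-1}`. -/
def updateRatio (p : (Fin n → X) → ℝ) (lam : ℝ) (d q : (Fin n → X) → (Fin n → Y) → ℝ)
    (x : Fin n → X) (y : Fin n → Y) : ℝ :=
  causalCond p (blahutArimoto lam d q) x y / q x y

/-- The stopping quantity `F = log₂ max c^k - 𝔼 log₂ c^k` of the Blahut–Arimoto iteration. Where
`p` makes a past impossible, `updateRatio` is `0`, so such pasts do not affect the maximum. -/
def stoppingGap (p : (Fin n → X) → ℝ) (lam : ℝ) (d q : (Fin n → X) → (Fin n → Y) → ℝ) : ℝ :=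
  Real.logb 2 (⨆ z : (Fin n → X) × (Fin n → Y), updateRatio p lam d q z.1 z.2) -
    jointExp p (blahutArimoto lam d q) (fun x y => Real.logb 2 (updateRatio p lam d q x y))

theorem blahutArimoto_div_causalCond (hq : ∀ x y, 0 < q x y) (x : Fin n → X) (y : Fin n → Y) :
    blahutArimoto lam d q x y / causalCond p (blahutArimoto lam d q) x y =
      2 ^ (-(lam * d x y)) / partitionFun lam d q x / updateRatio p lam d q x y := by
  have hqxy := (hq x y).ne'
  rw [updateRatio, blahutArimoto]
  field_simp

variable [Nonempty Y]

theorem updateRatio_pos (hp : ∀ x, 0 ≤ p x) (hq : ∀ x y, 0 < q x y) {x : Fin n → X}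
    (hx : 0 < p x) (y : Fin n → Y) : 0 < updateRatio p lam d q x y :=
  div_pos (causalCond_pos hp (isCondPMF_blahutArimoto hq).1 hx (blahutArimoto_pos hq x y)) (hq x y)

theorem jointExp_logb_updateRatio_le (hp : IsPMF p) (hq : ∀ x y, 0 < q x y)
    {r : (Fin n → X) → (Fin n → Y) → ℝ} (hr : IsCondPMF r) :
    jointExp p r (fun x y => Real.logb 2 (updateRatio p lam d q x y)) ≤
      Real.logb 2 (⨆ z : (Fin n → X) × (Fin n → Y), updateRatio p lam d q z.1 z.2) :=
  jointExp_le_of_le hp hr fun x y hx =>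
    Real.logb_le_logb_of_le one_lt_two (updateRatio_pos hp.1 hq hx y) <|
      le_ciSup (f := fun z : (Fin n → X) × (Fin n → Y) => updateRatio p lam d q z.1 z.2)
        (Set.finite_range _).bddAbove (x, y)

theorem jointExp_logb_blahutArimoto_div_causalCond (hp : ∀ x, 0 ≤ p x) (hq : ∀ x y, 0 < q x y)
    {r : (Fin n → X) → (Fin n → Y) → ℝ} (hr : IsCondPMF r) :
    jointExp p r (fun x y => Real.logb 2
        (blahutArimoto lam d q x y / causalCond p (blahutArimoto lam d q) x y)) =
      -lam * jointExp p r d - ∑ x, p x * Real.logb 2 (partitionFun lam d q x) -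
        jointExp p r (fun x y => Real.logb 2 (updateRatio p lam d q x y)) := by
  have hlog (x y) (hx : 0 < p x) : Real.logb 2
      (blahutArimoto lam d q x y / causalCond p (blahutArimoto lam d q) x y) =
        -lam * d x y - Real.logb 2 (partitionFun lam d q x) -
          Real.logb 2 (updateRatio p lam d q x y) := by
    have hZ := partitionFun_pos (lam := lam) (d := d) hq x
    have hweight : (0 : ℝ) < 2 ^ (-(lam * d x y)) := by positivity
    rw [blahutArimoto_div_causalCond hq,
      Real.logb_div (div_pos hweight hZ).ne' (updateRatio_pos hp hq hx y).ne',
      Real.logb_div hweight.ne' hZ.ne', Real.logb_rpow two_pos (by norm_num), neg_mul]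
  rw [jointExp_congr_of_pos hp hlog, ← jointExp_fst hr]
  simp only [jointExp, mul_sub, Finset.sum_sub_distrib, Finset.mul_sum, mul_left_comm]

theorem directedInfo_add_mul_jointExp_blahutArimoto_le (hp : IsPMF p) (hq : ∀ x y, 0 < q x y)
    {r : (Fin n → X) → (Fin n → Y) → ℝ} (hr : IsCondPMF r) :
    directedInfo p (blahutArimoto lam d q) + lam * jointExp p (blahutArimoto lam d q) d ≤
      directedInfo p r + lam * jointExp p r d + stoppingGap p lam d q := by
  have hs := isCondPMF_blahutArimoto (lam := lam) (d := d) hq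
  have htangent := jointExp_logb_div_causalCond_le_directedInfo hp hs hr
    fun x y h0 => absurd h0 (blahutArimoto_pos hq x y).ne'
  rw [jointExp_logb_blahutArimoto_div_causalCond hp.1 hq hr] at htangent
  have hvalue : directedInfo p (blahutArimoto lam d q) = _ :=
    jointExp_logb_blahutArimoto_div_causalCond hp.1 hq hs
  have hmax := jointExp_logb_updateRatio_le (lam := lam) (d := d) hp hq hr
  rw [hvalue, stoppingGap]
  linarith

end BlahutArimoto

section StoppingCriterion

variable {X Y : Type} [Fintype X] [DecidableEq X] [Fintype Y] [DecidableEq Y] {n : ℕ}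
  {p : (Fin n → X) → ℝ} {lam : ℝ} {d q : (Fin n → X) → (Fin n → Y) → ℝ}

/-- The values of the directed information at the conditional pmfs of expected distortion at most
`D`; `Rn` is `1 / n` times its infimum. -/
def feasibleDirectedInfo (p : (Fin n → X) → ℝ) (d : (Fin n → X) → (Fin n → Y) → ℝ) (D : ℝ) :
    Set ℝ :=
  {v | ∃ r, IsCondPMF r ∧ jointExp p r d ≤ D ∧ v = directedInfo p r}

theorem Rn_eq_sInf_feasibleDirectedInfo (D : ℝ) :
    Rn n p d D = 1 / (n : ℝ) * sInf (feasibleDirectedInfo p d D) :=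
  rfl

variable [Nonempty Y]

theorem directedInfo_blahutArimoto_mem (hq : ∀ x y, 0 < q x y) :
    directedInfo p (blahutArimoto lam d q) ∈
      feasibleDirectedInfo p d (jointExp p (blahutArimoto lam d q) d) :=
  ⟨_, isCondPMF_blahutArimoto hq, le_rfl, rfl⟩

theorem directedInfo_blahutArimoto_sub_stoppingGap_mem_lowerBounds (hp : IsPMF p)
    (hlam : 0 ≤ lam) (hq : ∀ x y, 0 < q x y) :
    directedInfo p (blahutArimoto lam d q) - stoppingGap p lam d q ∈
      lowerBounds (feasibleDirectedInfo p d (jointExp p (blahutArimoto lam d q) d)) := by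
  rintro _ ⟨r, hr, hdist, rfl⟩
  have hlagrange := directedInfo_add_mul_jointExp_blahutArimoto_le (lam := lam) (d := d) hp hq hr
  have hcost := mul_le_mul_of_nonneg_left hdist hlam
  linarith

end StoppingCriterion

end FFRD

open FFRD in
theorem BA_stopping_criterion_general {X Y : Type} [Fintype X] [DecidableEq X] [Fintype Y]
    [Nonempty Y] [DecidableEq Y] {n : ℕ} (hn : 1 ≤ n) {p : (Fin n → X) → ℝ} (hp : IsPMF p)
    {lam : ℝ} (hlam : 0 ≤ lam) (d : (Fin n → X) → (Fin n → Y) → ℝ)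
    {q : (Fin n → X) → (Fin n → Y) → ℝ} (hq : ∀ x y, 0 < q x y)
    {ε : ℝ} (hF : stoppingGap p lam d q ≤ ε) :
    let r := blahutArimoto lam d q
    0 ≤ 1 / (n : ℝ) * directedInfo p r - Rn n p d (jointExp p r d) ∧
      1 / (n : ℝ) * directedInfo p r - Rn n p d (jointExp p r d) ≤ ε := by
  intro r
  have hmem : directedInfo p r ∈ feasibleDirectedInfo p d (jointExp p r d) :=
    directedInfo_blahutArimoto_mem hq
  have hlower := directedInfo_blahutArimoto_sub_stoppingGap_mem_lowerBounds (d := d) hp hlam hq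
  have hupper : sInf (feasibleDirectedInfo p d (jointExp p r d)) ≤ directedInfo p r :=
    csInf_le ⟨_, hlower⟩ hmem
  have hgap : directedInfo p r - sInf (feasibleDirectedInfo p d (jointExp p r d)) ≤
      stoppingGap p lam d q := sub_le_comm.1 (le_csInf ⟨_, hmem⟩ hlower)
  have hn_inv : 1 / (n : ℝ) ≤ 1 := div_le_one_of_le₀ (by exact_mod_cast hn) n.cast_nonneg
  rw [Rn_eq_sInf_feasibleDirectedInfo, ← mul_sub]
  refine ⟨mul_nonneg (by positivity) (sub_nonneg.2 hupper), ?_⟩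
  calc 1 / (n : ℝ) * (directedInfo p r - sInf (feasibleDirectedInfo p d (jointExp p r d)))
      ≤ directedInfo p r - sInf (feasibleDirectedInfo p d (jointExp p r d)) :=
        mul_le_of_le_one_left (sub_nonneg.2 hupper) hn_inv
    _ ≤ ε := hgap.trans hF

open FFRD in
/-- Corollary 1: if the stopping quantity `F` of the Blahut–Arimoto-type
iteration is at most `ε`, then the current value `R^k_n(D_k)` is within `ε` above `Rₙ(D_k)`. -/
theorem BA_stopping_criterion
    {X Y : Type} [Fintype X] [Nonempty X] [DecidableEq X] [Fintype Y] [Nonempty Y]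
    [DecidableEq Y]
    (n : ℕ) (hn : 1 ≤ n)
    (p : (Fin n → X) → ℝ) (hp : IsPMF p) (hppos : ∀ x, 0 < p x)
    (lam : ℝ) (hlam : 0 ≤ lam)
    (d : (Fin n → X) → (Fin n → Y) → ℝ) (hd : ∀ x y, 0 ≤ d x y)
    (q0 : (Fin n → X) → (Fin n → Y) → ℝ)
    (hq0 : IsCausalCondKernel q0) (hq0pos : ∀ x y, 0 < q0 x y)
    (r1 : (Fin n → X) → (Fin n → Y) → ℝ)
    (hr1 : ∀ x y, r1 x y =
      q0 x y * 2 ^ (-(lam * d x y)) / ∑ y', q0 x y' * 2 ^ (-(lam * d x y')))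
    (q1 : (Fin n → X) → (Fin n → Y) → ℝ) (hq1 : q1 = causalCond p r1)
    (c : (Fin n → X) → (Fin n → Y) → ℝ) (hc : ∀ x y, c x y = q1 x y / q0 x y)
    (Dk : ℝ) (hDk : Dk = ∑ x, ∑ y, p x * r1 x y * d x y)
    (Rk : ℝ)
    (hRk : Rk = (1 / (n : ℝ)) *
      ∑ x, ∑ y, p x * r1 x y * Real.logb 2 (r1 x y / q1 x y))
    (ε : ℝ)
    (hF : Real.logb 2 (⨆ z : (Fin n → X) × (Fin n → Y), c z.1 z.2) -
      (∑ x, ∑ y, p x * r1 x y * Real.logb 2 (c x y)) ≤ ε) :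
    0 ≤ Rk - Rn n p d Dk ∧ Rk - Rn n p d Dk ≤ ε := by
  subst hq1 hDk hRk
  obtain rfl : r1 = blahutArimoto lam d q0 := funext₂ hr1
  obtain rfl : c = updateRatio p lam d q0 := funext₂ hc
  exact BA_stopping_criterion_general hn hp hlam d hq0pos hF
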